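/- (Qubit one-sample universal test.) Let σ be a density matrix on ℂ² and ρ a known density matrix on ℂ² (the nominal state). With m = 3n, construct the estimator σ̂ = (1/2)·(I₂ + r̂_X σ_X + r̂_Y σ_Y + r̂_Z σ_Z), where for each K ∈ {X,Y,Z}, r̂_K is the average of n i.i.d. random variables valued in [−1,1] with mean Tr[σ_K σ], the three families being mutually independent. Given α ∈ (0,1), set c_m = √(54·ln(6/α)/m) and accept H₀ iff ‖σ̂ − ρ‖₁ ≤ c_m. Then: (i) if σ = ρ, the probability of rejecting H₀ is at most α; and (ii) if σ ≠ ρ and c_m < ‖ρ − σ‖₁, the probability of accepting H₀ is at most 6·exp(−m·(‖ρ − σ‖₁ − c_m)²/54). -/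

import Mathlib

open Matrix MeasureTheory ProbabilityTheory
open scoped ComplexOrder

/-- The positive semidefinite square root of a positive semidefinite matrix (the definition of
`Matrix.PosSemidef.sqrt` in the older Mathlib). -/
noncomputable def Matrix.PosSemidef.sqrt {n 𝕜 : Type*} [Fintype n] [RCLike 𝕜] [DecidableEq n]
    {A : Matrix n n 𝕜} (hA : A.PosSemidef) : Matrix n n 𝕜 :=
  hA.1.eigenvectorUnitary.1 * diagonal ((↑) ∘ Real.sqrt ∘ hA.1.eigenvalues) *
  (star hA.1.eigenvectorUnitary : Matrix n n 𝕜)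

/-- The positive semidefinite square root of a matrix (junk value `0` if the matrix is not
positive semidefinite). -/
noncomputable def matSqrt {d : ℕ} (A : Matrix (Fin d) (Fin d) ℂ) : Matrix (Fin d) (Fin d) ℂ :=
  open scoped Classical in
  if h : A.PosSemidef then h.sqrt else 0

/-- The trace norm `‖A‖₁ = Tr[√(A†A)]`. -/
noncomputable def traceNorm {d : ℕ} (A : Matrix (Fin d) (Fin d) ℂ) : ℝ :=
  (matSqrt (Aᴴ * A)).trace.re

/-- The three Pauli matrices `σ_X, σ_Y, σ_Z`. -/
noncomputable def pauli : Fin 3 → Matrix (Fin 2) (Fin 2) ℂ :=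
  ![!![0, 1; 1, 0], !![0, -Complex.I; Complex.I, 0], !![1, 0; 0, -1]]

/-!
In Bloch coordinates the trace distance of two Hermitian qubit operators of trace one is the
Euclidean distance of their Bloch vectors, because `(v · σ)² = ‖v‖² I`. An estimation error of at
least `t` therefore forces an error of at least `t / 3` in one of the three coordinates, and
Hoeffding's inequality with a union bound gives probability at most
`3 · 2 · exp (-n (t / 3) ^ 2 / 2) = 6 · exp (-m t ^ 2 / 54)`. The threshold `c` makes this bound
equal to `α` at `t = c`. When `σ ≠ ρ`, acceptance implies `‖σ̂ - σ‖₁ ≥ ‖ρ - σ‖₁ - c` by the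
triangle inequality.
-/

section TraceNorm

theorem eigenvalues_eq_of_eq_smul_one {n 𝕜 : Type*} [Fintype n] [DecidableEq n] [RCLike 𝕜]
    {A : Matrix n n 𝕜} (hA : A.IsHermitian) {a : ℝ} (h : A = a • 1) (i : n) :
    hA.eigenvalues i = a := by
  have : Nonempty n := ⟨i⟩
  have hspectrum : spectrum ℝ A = {a} := by
    rw [h, ← Algebra.algebraMap_eq_smul_one, spectrum.scalar_eq]
  simpa [hspectrum] using hA.eigenvalues_mem_spectrum_real i

theorem trace_posSemidef_sqrt {n 𝕜 : Type*} [Fintype n] [DecidableEq n] [RCLike 𝕜]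
    {A : Matrix n n 𝕜} (hA : A.PosSemidef) :
    hA.sqrt.trace = ∑ i, (Real.sqrt (hA.1.eigenvalues i) : 𝕜) := by
  rw [Matrix.PosSemidef.sqrt, trace_mul_cycle, Unitary.coe_star_mul_self, one_mul, trace_diagonal]
  rfl

theorem traceNorm_eq_sum_sqrt_eigenvalues {d : ℕ} (A : Matrix (Fin d) (Fin d) ℂ) :
    traceNorm A = ∑ i, √((isHermitian_conjTranspose_mul_self A).eigenvalues i) := by
  rw [traceNorm, matSqrt, dif_pos (posSemidef_conjTranspose_mul_self A), trace_posSemidef_sqrt]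
  simp

theorem traceNorm_of_conjTranspose_mul_self_eq_sq_smul_one {d : ℕ} {A : Matrix (Fin d) (Fin d) ℂ}
    {a : ℝ} (ha : 0 ≤ a) (h : Aᴴ * A = a ^ 2 • 1) : traceNorm A = d * a := by
  simp [traceNorm_eq_sum_sqrt_eigenvalues, eigenvalues_eq_of_eq_smul_one _ h, Real.sqrt_sq ha]

end TraceNorm

section Bloch

theorem sum_smul_pauli (v : Fin 3 → ℂ) :
    ∑ K, v K • pauli K =
      !![v 2, v 0 - v 1 * Complex.I; v 0 + v 1 * Complex.I, -v 2] := by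
  ext i j
  fin_cases i <;> fin_cases j <;> simp [pauli, Fin.sum_univ_three, sub_eq_add_neg]

theorem sum_smul_pauli_mul_self (v : Fin 3 → ℂ) :
    (∑ K, v K • pauli K) * ∑ K, v K • pauli K = (∑ K, v K ^ 2) • 1 := by
  rw [sum_smul_pauli, mul_fin_two, one_fin_two, Fin.sum_univ_three]
  ext i j
  fin_cases i <;> fin_cases j <;>
    simp only [Fin.zero_eta, Fin.mk_one, of_apply, cons_val', cons_val_zero, cons_val_one,
      cons_val_fin_one, Matrix.smul_apply, smul_eq_mul] <;>
    grind [Complex.I_sq]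

theorem isHermitian_pauli (K : Fin 3) : (pauli K).IsHermitian := by
  ext i j
  fin_cases K <;> fin_cases i <;> fin_cases j <;> simp [pauli]

theorem conjTranspose_sum_smul_pauli (v : Fin 3 → ℝ) :
    (∑ K, (v K : ℂ) • pauli K)ᴴ = ∑ K, (v K : ℂ) • pauli K := by
  simp [conjTranspose_sum, (isHermitian_pauli _).eq]

/-- The qubit operator `(I + r · σ) / 2` of trace one with Bloch vector `r`; it is a density matrix
when `‖r‖ ≤ 1`. -/
noncomputable def blochMatrix (r : EuclideanSpace ℝ (Fin 3)) : Matrix (Fin 2) (Fin 2) ℂ :=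
  (1 / 2 : ℂ) • (1 + ∑ K, (r K : ℂ) • pauli K)

/-- The Bloch vector `(Tr[σ_X ρ], Tr[σ_Y ρ], Tr[σ_Z ρ])` of a qubit operator `ρ`; the real parts
lose nothing when `ρ` is Hermitian. -/
noncomputable def blochVector (ρ : Matrix (Fin 2) (Fin 2) ℂ) : EuclideanSpace ℝ (Fin 3) :=
  WithLp.toLp 2 fun K => (pauli K * ρ).trace.re

theorem blochMatrix_blochVector {ρ : Matrix (Fin 2) (Fin 2) ℂ} (hρ : ρ.IsHermitian)
    (htr : ρ.trace = 1) : blochMatrix (blochVector ρ) = ρ := by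
  have him₀ := congrArg Complex.im (hρ.apply 0 0)
  have him₁ := congrArg Complex.im (hρ.apply 1 1)
  have hre := congrArg Complex.re (hρ.apply 0 1)
  have him := congrArg Complex.im (hρ.apply 0 1)
  have htr_re := congrArg Complex.re htr
  simp only [RCLike.star_def, Complex.conj_im, Complex.conj_re, trace_fin_two, Complex.add_re,
    Complex.one_re] at him₀ him₁ hre him htr_re
  rw [blochMatrix, sum_smul_pauli]
  ext i j
  fin_cases i <;> fin_cases j <;> apply Complex.ext <;>
    simp [blochVector, pauli, trace_fin_two, mul_apply, Fin.sum_univ_two] <;> linarith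

theorem traceNorm_blochMatrix_sub (u v : EuclideanSpace ℝ (Fin 3)) :
    traceNorm (blochMatrix u - blochMatrix v) = ‖u - v‖ := by
  set w := u - v with hw
  have hsub : blochMatrix u - blochMatrix v = (1 / 2 : ℂ) • ∑ K, (w K : ℂ) • pauli K := by
    simp [blochMatrix, hw, ← smul_sub, sub_smul]
  have hsq : (blochMatrix u - blochMatrix v)ᴴ * (blochMatrix u - blochMatrix v) =
      (‖w‖ / 2) ^ 2 • 1 := by
    rw [hsub, conjTranspose_smul, conjTranspose_sum_smul_pauli, smul_mul_smul,
      sum_smul_pauli_mul_self, smul_smul, div_pow, EuclideanSpace.real_norm_sq_eq,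
      ← Complex.coe_smul]
    congr 1
    simp only [one_div, star_inv₀, star_ofNat, Complex.ofReal_div, Complex.ofReal_sum,
      Complex.ofReal_pow, Complex.ofReal_ofNat]
    ring
  rw [traceNorm_of_conjTranspose_mul_self_eq_sq_smul_one (by positivity) hsq]
  push_cast
  ring

theorem traceNorm_blochMatrix_sub_of_isHermitian (u : EuclideanSpace ℝ (Fin 3))
    {ρ : Matrix (Fin 2) (Fin 2) ℂ} (hρ : ρ.IsHermitian) (htr : ρ.trace = 1) :
    traceNorm (blochMatrix u - ρ) = ‖u - blochVector ρ‖ := by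
  rw [← traceNorm_blochMatrix_sub, blochMatrix_blochVector hρ htr]

theorem traceNorm_sub_le_add_of_isHermitian (u : EuclideanSpace ℝ (Fin 3))
    {ρ σ : Matrix (Fin 2) (Fin 2) ℂ} (hρ : ρ.IsHermitian) (hρtr : ρ.trace = 1)
    (hσ : σ.IsHermitian) (hσtr : σ.trace = 1) :
    traceNorm (ρ - σ) ≤ traceNorm (blochMatrix u - ρ) + traceNorm (blochMatrix u - σ) := by
  rw [← blochMatrix_blochVector hρ hρtr, ← blochMatrix_blochVector hσ hσtr]
  simp only [traceNorm_blochMatrix_sub]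
  exact norm_sub_rev u (blochVector ρ) ▸ norm_sub_le_norm_sub_add_norm_sub ..

end Bloch

section Concentration

variable {Ω ι : Type*} [MeasurableSpace Ω] {μ : Measure Ω} [Fintype ι]

theorem measureReal_le_abs_le_of_hasSubgaussianMGF {X : Ω → ℝ} {c : NNReal}
    (h : HasSubgaussianMGF X c μ) {ε : ℝ} (hε : 0 ≤ ε) :
    μ.real {ω | ε ≤ |X ω|} ≤ 2 * Real.exp (-ε ^ 2 / (2 * c)) := by
  have hsplit : {ω | ε ≤ |X ω|} = {ω | ε ≤ X ω} ∪ {ω | ε ≤ (-X) ω} :=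
    Set.ext fun ω => le_abs (a := ε) (b := X ω)
  calc μ.real {ω | ε ≤ |X ω|}
    _ ≤ μ.real {ω | ε ≤ X ω} + μ.real {ω | ε ≤ (-X) ω} := hsplit ▸ measureReal_union_le _ _
    _ ≤ Real.exp (-ε ^ 2 / (2 * c)) + Real.exp (-ε ^ 2 / (2 * c)) :=
      add_le_add (h.measure_ge_le hε) (h.neg.measure_ge_le hε)
    _ = 2 * Real.exp (-ε ^ 2 / (2 * c)) := (two_mul _).symm

theorem measureReal_le_sum_abs_le_of_hasSubgaussianMGF [IsFiniteMeasure μ] [Nonempty ι]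
    {X : ι → Ω → ℝ} {c : NNReal} (h : ∀ i, HasSubgaussianMGF (X i) c μ) {t : ℝ} (ht : 0 ≤ t) :
    μ.real {ω | t ≤ ∑ i, |X i ω|} ≤
      2 * Fintype.card ι * Real.exp (-(t / Fintype.card ι) ^ 2 / (2 * c)) := by
  have hcover : {ω | t ≤ ∑ i, |X i ω|} ⊆ ⋃ i, {ω | t / Fintype.card ι ≤ |X i ω|} := by
    intro ω hω
    have hsum : ∑ _i : ι, t / Fintype.card ι ≤ ∑ i, |X i ω| := by
      simpa [mul_div_cancel₀] using hω
    obtain ⟨i, -, hi⟩ := Finset.exists_le_of_sum_le Finset.univ_nonempty hsum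
    exact Set.mem_iUnion.2 ⟨i, hi⟩
  calc μ.real {ω | t ≤ ∑ i, |X i ω|}
    _ ≤ μ.real (⋃ i, {ω | t / Fintype.card ι ≤ |X i ω|}) := measureReal_mono hcover
    _ ≤ ∑ i, μ.real {ω | t / Fintype.card ι ≤ |X i ω|} := measureReal_iUnion_fintype_le _
    _ ≤ ∑ _i : ι, 2 * Real.exp (-(t / Fintype.card ι) ^ 2 / (2 * c)) :=
      Finset.sum_le_sum fun i _ => measureReal_le_abs_le_of_hasSubgaussianMGF (h i) (by positivity)
    _ = 2 * Fintype.card ι * Real.exp (-(t / Fintype.card ι) ^ 2 / (2 * c)) := by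
      rw [Finset.sum_const, Finset.card_univ, nsmul_eq_mul]
      ring

theorem hasSubgaussianMGF_average {X : ι → Ω → ℝ} {c : NNReal} (hindep : iIndepFun X μ)
    (h : ∀ i, HasSubgaussianMGF (X i) c μ) :
    HasSubgaussianMGF (fun ω => (∑ i, X i ω) / Fintype.card ι) (c / Fintype.card ι) μ := by
  have hsum := (HasSubgaussianMGF.sum_of_iIndepFun (s := Finset.univ) hindep
    fun i _ => h i).const_mul (Fintype.card ι : ℝ)⁻¹
  convert hsum using 1
  · ext ω
    rw [div_eq_inv_mul]
  · ext
    change (c : ℝ) / Fintype.card ι = (Fintype.card ι : ℝ)⁻¹ ^ 2 * ↑(∑ _i : ι, c)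
    simp only [Finset.sum_const, Finset.card_univ, nsmul_eq_mul, NNReal.coe_mul,
      NNReal.coe_natCast]
    field_simp

theorem hasSubgaussianMGF_average_sub_of_mem_Icc [IsProbabilityMeasure μ] [Nonempty ι]
    {X : ι → Ω → ℝ} {a b r : ℝ} (hmeas : ∀ i, AEMeasurable (X i) μ)
    (hbdd : ∀ i, ∀ᵐ ω ∂μ, X i ω ∈ Set.Icc a b) (hmean : ∀ i, ∫ ω, X i ω ∂μ = r)
    (hindep : iIndepFun X μ) :
    HasSubgaussianMGF (fun ω => (∑ i, X i ω) / Fintype.card ι - r)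
      ((‖b - a‖₊ / 2) ^ 2 / Fintype.card ι) μ := by
  have hcentered := hasSubgaussianMGF_average (hindep.comp (fun _ x => x - r) fun _ => by fun_prop)
    fun i => hmean i ▸ hasSubgaussianMGF_of_mem_Icc (hmeas i) (hbdd i)
  convert hcentered using 2 with ω
  simp [sub_div]

theorem norm_le_sum_abs (v : EuclideanSpace ℝ ι) : ‖v‖ ≤ ∑ i, |v i| := by
  rw [EuclideanSpace.norm_eq]
  exact Real.sqrt_le_iff.2 ⟨by positivity,
    Finset.sum_sq_le_sq_sum_of_nonneg fun i _ => norm_nonneg (v i)⟩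

theorem measureReal_le_norm_average_sub_le [IsProbabilityMeasure μ] [Nonempty ι] {κ : Type*}
    [Fintype κ] [Nonempty κ] {X : ι → κ → Ω → ℝ} {a b : ℝ} {r : EuclideanSpace ℝ ι}
    (hmeas : ∀ i k, AEMeasurable (X i k) μ) (hbdd : ∀ i k, ∀ᵐ ω ∂μ, X i k ω ∈ Set.Icc a b)
    (hmean : ∀ i k, ∫ ω, X i k ω ∂μ = r i) (hindep : ∀ i, iIndepFun (X i) μ)
    {t : ℝ} (ht : 0 ≤ t) :
    μ.real {ω | t ≤ ‖WithLp.toLp 2 (fun i => (∑ k, X i k ω) / Fintype.card κ) - r‖} ≤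
      2 * Fintype.card ι *
        Real.exp (-(2 * Fintype.card κ * t ^ 2) / (Fintype.card ι * (b - a)) ^ 2) := by
  have hsub (i : ι) := hasSubgaussianMGF_average_sub_of_mem_Icc (hmeas i) (hbdd i) (hmean i)
    (hindep i)
  have hexponent : -(t / Fintype.card ι) ^ 2 /
      (2 * ((‖b - a‖₊ / 2) ^ 2 / Fintype.card κ : NNReal)) =
      -(2 * Fintype.card κ * t ^ 2) / (Fintype.card ι * (b - a)) ^ 2 := by
    push_cast
    rw [Real.norm_eq_abs, div_pow |b - a|, sq_abs]
    field_simp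
  rw [← hexponent]
  exact (measureReal_mono fun ω hω => hω.out.trans (norm_le_sum_abs _)).trans
    (measureReal_le_sum_abs_le_of_hasSubgaussianMGF hsub ht)

end Concentration

section Tomography

theorem mul_exp_neg_mul_sq_sqrt_log_div {A α k m : ℝ} (hα : 0 < α) (hαA : α ≤ A) (hk : 0 < k)
    (hm : 0 < m) : A * Real.exp (-m * √(k * Real.log (A / α) / m) ^ 2 / k) = α := by
  have hA : 0 < A := hα.trans_le hαA
  have hlog : 0 ≤ Real.log (A / α) := Real.log_nonneg ((one_le_div hα).2 hαA)
  have hexponent : -m * √(k * Real.log (A / α) / m) ^ 2 / k = -Real.log (A / α) := by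
    rw [Real.sq_sqrt (by positivity)]
    field_simp
  rw [hexponent, Real.exp_neg, Real.exp_log (by positivity)]
  field_simp

variable {Ω : Type*} [MeasurableSpace Ω] {μ : Measure Ω}

/-- The Pauli tomography estimator `σ̂`, where `x K ℓ` is the outcome of the `ℓ`-th measurement of
the observable `σ_K`. It has trace one but need not be positive semidefinite. -/
noncomputable def pauliEstimator {n : ℕ} (x : Fin 3 → Fin n → ℝ) : Matrix (Fin 2) (Fin 2) ℂ :=
  blochMatrix (WithLp.toLp 2 fun K => (∑ ℓ, x K ℓ) / n)

theorem measureReal_le_traceNorm_pauliEstimator_sub_le [IsProbabilityMeasure μ]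
    {σ : Matrix (Fin 2) (Fin 2) ℂ} (hσ : σ.IsHermitian) (hσtr : σ.trace = 1) {n : ℕ} (hn : 1 ≤ n)
    {X : Fin 3 → Fin n → Ω → ℝ} (hmeas : ∀ K ℓ, AEMeasurable (X K ℓ) μ)
    (hbdd : ∀ K ℓ, ∀ᵐ ω ∂μ, X K ℓ ω ∈ Set.Icc (-1 : ℝ) 1)
    (hmean : ∀ K ℓ, ∫ ω, X K ℓ ω ∂μ = (pauli K * σ).trace.re)
    (hindep : ∀ K, iIndepFun (X K) μ) {t : ℝ} (ht : 0 ≤ t) :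
    μ.real {ω | t ≤ traceNorm (pauliEstimator (fun K ℓ => X K ℓ ω) - σ)} ≤
      6 * Real.exp (-(n * t ^ 2) / 18) := by
  have : Nonempty (Fin n) := ⟨⟨0, hn⟩⟩
  have hconstant : (2 : ℝ) * Fintype.card (Fin 3) = 6 := by norm_num
  have hexponent : -(2 * Fintype.card (Fin n) * t ^ 2) / (Fintype.card (Fin 3) * (1 - -1)) ^ 2 =
      -(n * t ^ 2) / 18 := by
    simp only [Fintype.card_fin]
    ring
  simp only [pauliEstimator, traceNorm_blochMatrix_sub_of_isHermitian _ hσ hσtr]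
  rw [← hconstant, ← hexponent]
  simpa only [Fintype.card_fin] using
    measureReal_le_norm_average_sub_le (r := blochVector σ) hmeas hbdd hmean hindep ht

theorem qubit_one_sample_test_general [IsProbabilityMeasure μ]
    {σ ρ : Matrix (Fin 2) (Fin 2) ℂ} (hσ : σ.IsHermitian) (hσtr : σ.trace = 1)
    (hρ : ρ.IsHermitian) (hρtr : ρ.trace = 1) {n m : ℕ} (hn : 1 ≤ n) (hm : m = 3 * n)
    {X : Fin 3 → Fin n → Ω → ℝ} (hmeas : ∀ K ℓ, AEMeasurable (X K ℓ) μ)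
    (hbdd : ∀ K ℓ, ∀ᵐ ω ∂μ, X K ℓ ω ∈ Set.Icc (-1 : ℝ) 1)
    (hmean : ∀ K ℓ, ∫ ω, X K ℓ ω ∂μ = (pauli K * σ).trace.re)
    (hindep : ∀ K, iIndepFun (X K) μ) {α : ℝ} (hα : α ∈ Set.Ioo (0 : ℝ) 1)
    {c : ℝ} (hc : c = √(54 * Real.log (6 / α) / m)) :
    μ {ω | c < traceNorm (pauliEstimator (fun K ℓ => X K ℓ ω) - σ)} ≤ ENNReal.ofReal α ∧
    (c < traceNorm (ρ - σ) →
      μ {ω | traceNorm (pauliEstimator (fun K ℓ => X K ℓ ω) - ρ) ≤ c} ≤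
        ENNReal.ofReal (6 * Real.exp (-(m : ℝ) * (traceNorm (ρ - σ) - c) ^ 2 / 54))) := by
  have hm0 : (0 : ℝ) < m := by exact_mod_cast (by omega : 0 < m)
  have htail {t : ℝ} (ht : 0 ≤ t) :
      μ {ω | t ≤ traceNorm (pauliEstimator (fun K ℓ => X K ℓ ω) - σ)} ≤
        ENNReal.ofReal (6 * Real.exp (-(m : ℝ) * t ^ 2 / 54)) := by
    have hexponent : -(m : ℝ) * t ^ 2 / 54 = -(n * t ^ 2) / 18 := by
      rw [hm]
      push_cast
      ring
    rw [← ofReal_measureReal, hexponent]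
    exact ENNReal.ofReal_le_ofReal
      (measureReal_le_traceNorm_pauliEstimator_sub_le hσ hσtr hn hmeas hbdd hmean hindep ht)
  constructor
  · have hlevel : 6 * Real.exp (-(m : ℝ) * c ^ 2 / 54) = α :=
      hc ▸ mul_exp_neg_mul_sq_sqrt_log_div hα.1 (by linarith [hα.2]) (by norm_num) hm0
    rw [← hlevel]
    exact (measure_mono fun ω (hω : c < traceNorm _) => hω.le).trans
      (htail (hc ▸ Real.sqrt_nonneg _))
  · intro hlt
    refine (measure_mono fun ω (hω : traceNorm _ ≤ c) => ?_).trans (htail (sub_nonneg.2 hlt.le))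
    have htriangle := traceNorm_sub_le_add_of_isHermitian
      (WithLp.toLp 2 fun K => (∑ ℓ, X K ℓ ω) / n) hρ hρtr hσ hσtr
    exact sub_le_iff_le_add'.2 (htriangle.trans (add_le_add_left hω _))

end Tomography

/-- Qubit one-sample universal test via Pauli tomography: accepting `H₀` iff
`‖σ̂ − ρ‖₁ ≤ c_m` with `c_m = √(54·ln(6/α)/m)` gives type I error at most `α` and type II error
at most `6·exp(−m·(‖ρ−σ‖₁−c_m)²/54)`. -/
theorem qubit_one_sample_test
    {Ω : Type*} [MeasurableSpace Ω] (μ : Measure Ω) [IsProbabilityMeasure μ]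
    (σ ρ : Matrix (Fin 2) (Fin 2) ℂ)
    (hσ : σ.PosSemidef) (hσtr : σ.trace = 1)
    (hρ : ρ.PosSemidef) (hρtr : ρ.trace = 1)
    (n : ℕ) (hn : 1 ≤ n) (m : ℕ) (hm : m = 3 * n)
    (X : Fin 3 → Fin n → Ω → ℝ)
    (hmeas : ∀ K ℓ, Measurable (X K ℓ))
    (hbdd : ∀ K ℓ ω, X K ℓ ω ∈ Set.Icc (-1 : ℝ) 1)
    (hmean : ∀ K ℓ, ∫ ω, X K ℓ ω ∂μ = ((pauli K) * σ).trace.re)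
    (hident : ∀ K ℓ ℓ', IdentDistrib (X K ℓ) (X K ℓ') μ μ)
    (hindep : iIndepFun (fun p : Fin 3 × Fin n => X p.1 p.2) μ)
    (rhat : Fin 3 → Ω → ℝ) (hrhat : ∀ K ω, rhat K ω = (1 / n : ℝ) * ∑ ℓ, X K ℓ ω)
    (sigmahat : Ω → Matrix (Fin 2) (Fin 2) ℂ)
    (hsig : ∀ ω, sigmahat ω = (1 / 2 : ℂ) • (1 + ∑ K, (rhat K ω : ℂ) • pauli K))
    (α : ℝ) (hα : α ∈ Set.Ioo (0 : ℝ) 1)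
    (c : ℝ) (hc : c = Real.sqrt (54 * Real.log (6 / α) / m)) :
    (σ = ρ → μ {ω | traceNorm (sigmahat ω - ρ) > c} ≤ ENNReal.ofReal α) ∧
    (σ ≠ ρ → c < traceNorm (ρ - σ) →
      μ {ω | traceNorm (sigmahat ω - ρ) ≤ c} ≤
        ENNReal.ofReal (6 * Real.exp (-(m : ℝ) * (traceNorm (ρ - σ) - c) ^ 2 / 54))) := by
  obtain rfl : rhat = fun K ω => (1 / n : ℝ) * ∑ ℓ, X K ℓ ω := funext₂ hrhat
  obtain rfl : sigmahat = fun ω => pauliEstimator fun K ℓ => X K ℓ ω := by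
    ext1 ω
    simp [hsig, pauliEstimator, blochMatrix, div_eq_inv_mul]
  obtain ⟨typeI, typeII⟩ := qubit_one_sample_test_general hσ.1 hσtr hρ.1 hρtr hn hm
    (fun K ℓ => (hmeas K ℓ).aemeasurable) (fun K ℓ => ae_of_all μ (hbdd K ℓ)) hmean
    (fun K => hindep.precomp (g := Prod.mk K) (Prod.mk_right_injective K)) hα hc
  exact ⟨fun h => h ▸ typeI, fun _ => typeII⟩
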